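/- Let w be a non-increasing positive function on I=(0,a), 0<a≤∞, with W(t)=∫₀ᵗ w dm finite on I. For a measurable f on I define B(f) = inf{ ∫_I |u| dm + C : u measurable, C ≥ 0, f = u + v a.e. for some measurable v with v*(t) ≤ C·w(t) for all t∈I }. Then for every measurable f on I, inf{ B(g) : g measurable on I with f ≺ g } = inf{ ∫_I |u| dm + sup_{x∈I} (1/W(x))∫₀ˣ h* dm : u, h measurable, f = u + h a.e. }, the equality understood in [0,∞]; that is, the space Q_{L₁+L∞,w} coincides with L₁ + M_W with equality of norms. -/

import Mathlib

open MeasureTheory Set Filter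
open scoped ENNReal

/-- The interval `(0, a)` for `a : ℝ≥0∞` (equals `(0,∞)` when `a = ∞`). -/
def Iset (a : ℝ≥0∞) : Set ℝ := {x : ℝ | 0 < x ∧ ENNReal.ofReal x < a}

/-- Lebesgue measure restricted to the interval `(0,a)`. -/
noncomputable def volI (a : ℝ≥0∞) : Measure ℝ := volume.restrict (Iset a)

/-- Decreasing rearrangement of an `ℝ≥0∞`-valued function with respect to a measure `μ`:
`f^{*,μ}(t) = inf {s > 0 : μ({f > s}) ≤ t}`. -/
noncomputable def rearrE (μ : Measure ℝ) (f : ℝ → ℝ≥0∞) (t : ℝ) : ℝ≥0∞ :=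
  sInf {s : ℝ≥0∞ | 0 < s ∧ μ {x | s < f x} ≤ ENNReal.ofReal t}

/-- Decreasing rearrangement of a real function with respect to a measure `μ` on `ℝ`:
`f^{*,μ}(t) = inf {s > 0 : μ({|f| > s}) ≤ t}`. -/
noncomputable def rearr (μ : Measure ℝ) (f : ℝ → ℝ) (t : ℝ) : ℝ≥0∞ :=
  rearrE μ (fun x => ENNReal.ofReal |f x|) t

/-- The measure `w·dm` on the set `I`. -/
noncomputable def wMeas (I : Set ℝ) (w : ℝ → ℝ) : Measure ℝ :=
  (volume.restrict I).withDensity (fun t => ENNReal.ofReal (w t))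

/-- `W(t) = ∫₀ᵗ w dm`. -/
noncomputable def Wfun (w : ℝ → ℝ) (t : ℝ) : ℝ := ∫ s in Set.Ioo (0:ℝ) t, w s

/-- `b = ∫_I w dm` as an extended real number. -/
noncomputable def bval (a : ℝ≥0∞) (w : ℝ → ℝ) : ℝ≥0∞ := ∫⁻ x in Iset a, ENNReal.ofReal (w x)

/-- `B(f)`: the infimum of `∫_I |u| dm + C` over decompositions `f = u + v` a.e. with
`v*(t) ≤ C·w(t)` for all `t ∈ I` (the gauge of `M_{L₁+L∞,w} = L₁ + M_{L∞,w}`). -/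
noncomputable def Bnorm (a : ℝ≥0∞) (w f : ℝ → ℝ) : ℝ≥0∞ :=
  sInf {c : ℝ≥0∞ | ∃ u v : ℝ → ℝ, ∃ C : ℝ, Measurable u ∧ Measurable v ∧ 0 ≤ C ∧
    (∀ᵐ x ∂(volI a), f x = u x + v x) ∧
    (∀ t ∈ Iset a, rearr (volI a) v t ≤ ENNReal.ofReal (C * w t)) ∧
    c = (∫⁻ x in Iset a, ENNReal.ofReal |u x|) + ENNReal.ofReal C}

/-- The Marcinkiewicz norm `‖h‖_{M_W} = sup_{x∈I} (1/W(x)) ∫₀ˣ h* dm`. -/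
noncomputable def MWnorm (a : ℝ≥0∞) (w h : ℝ → ℝ) : ℝ≥0∞ :=
  ⨆ x ∈ Iset a,
    (∫⁻ t in Set.Ioo 0 x, rearr (volI a) h t) / (∫⁻ t in Set.Ioo 0 x, ENNReal.ofReal (w t))

/-!
Everything rests on the formula `∫₀ˣ F* = min_s (x s + ∫ (F - s)⁺ dμ)`, attained at `s = F*(x)`: it
makes `F ↦ ∫₀ˣ F*` subadditive.

If `f = u + h` with `‖u‖₁` and `C = ‖h‖_{M_W}` finite, then `g = u* + C w` submajorizes `f`, and its
two summands witness `B(g) ≤ ‖u‖₁ + C`. Conversely, if `f ≺ g = u + v` with `v* ≤ C w`, then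
`∫₀ˣ f* ≤ ‖u‖₁ + C W(x)`. Cut `|f|` at the least level `κ` for which `∫ (|f| - κ)⁺ ≤ ‖u‖₁`. At any
lower level the part cut off has mass more than `‖u‖₁`. Once its rearrangement has collected mass
`‖u‖₁` on `(0, x)`, what remains has rearrangement integral at most `C W(x)`; for smaller `x` the
remaining part has constant rearrangement, and the bound follows because `W(x) / x` is
non-increasing.
-/

section Lintegral

variable {α : Type*} [MeasurableSpace α]

lemma setLIntegral_eq_of_subset_of_forall_sdiff_eq_zero {μ : Measure α} {s t : Set α}
    {φ : α → ℝ≥0∞} (hs : MeasurableSet s) (ht : MeasurableSet t) (hst : s ⊆ t)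
    (hφ : ∀ x ∈ t \ s, φ x = 0) : ∫⁻ x in s, φ x ∂μ = ∫⁻ x in t, φ x ∂μ := by
  rw [← lintegral_inter_add_sdiff φ t hs, inter_eq_right.2 hst,
    setLIntegral_eq_zero (ht.diff hs) hφ, add_zero]

lemma setLIntegral_le_mul_add_lintegral_tsub {μ : Measure α} {E : Set α} {c : ℝ≥0∞}
    (hE : μ E ≤ c) (F : α → ℝ≥0∞) (s : ℝ≥0∞) :
    ∫⁻ x in E, F x ∂μ ≤ c * s + ∫⁻ x in E, (F x - s) ∂μ :=
  calc ∫⁻ x in E, F x ∂μ ≤ ∫⁻ x in E, (s + (F x - s)) ∂μ := lintegral_mono fun _ => le_add_tsub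
    _ = μ E * s + ∫⁻ x in E, (F x - s) ∂μ := by
      rw [lintegral_add_left measurable_const, setLIntegral_const, mul_comm]
    _ ≤ c * s + ∫⁻ x in E, (F x - s) ∂μ := by gcongr

end Lintegral

section Interval

lemma measurableSet_Iset (c : ℝ≥0∞) : MeasurableSet (Iset c) :=
  measurableSet_Ioi.inter (measurableSet_lt ENNReal.measurable_ofReal measurable_const)

lemma Iset_subset_Ioi (c : ℝ≥0∞) : Iset c ⊆ Ioi 0 := fun _ ht => ht.1

lemma mem_Iset_of_le {c : ℝ≥0∞} {s t : ℝ} (ht : t ∈ Iset c) (hs : 0 < s) (hst : s ≤ t) :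
    s ∈ Iset c :=
  ⟨hs, (ENNReal.ofReal_le_ofReal hst).trans_lt ht.2⟩

lemma Iset_top : Iset ∞ = Ioi 0 := by
  ext t; simp [Iset]

lemma Iset_ofReal (x : ℝ) : Iset (ENNReal.ofReal x) = Ioo 0 x := by
  ext t
  exact and_congr_right fun ht => ENNReal.ofReal_lt_ofReal_iff_of_nonneg ht.le

lemma Iset_inter_Iset (c d : ℝ≥0∞) : Iset c ∩ Iset d = Iset (min c d) := by
  ext t
  simp only [Iset, mem_inter_iff, mem_ofPred_eq, lt_min_iff]
  tauto

lemma volume_Iset (c : ℝ≥0∞) : volume (Iset c) = c := by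
  rcases eq_or_ne c ∞ with rfl | hc
  · rw [Iset_top, Real.volume_Ioi]
  · rw [← ENNReal.ofReal_toReal hc, Iset_ofReal, Real.volume_Ioo, sub_zero]

lemma exists_rat_gt_mem_Iset {c : ℝ≥0∞} {t : ℝ} (ht : t ∈ Iset c) :
    ∃ q : ℚ, t < q ∧ (q : ℝ) ∈ Iset c := by
  obtain ⟨q, -, htq, hqc⟩ := ENNReal.lt_iff_exists_rat_btwn.1 ht.2
  have htq' : t < q := (ENNReal.ofReal_lt_ofReal_iff_of_nonneg ht.1.le).1 htq
  exact ⟨q, htq', ht.1.trans htq', hqc⟩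

lemma setLIntegral_Iset_eq_iSup (c : ℝ≥0∞) (φ : ℝ → ℝ≥0∞) :
    ∫⁻ t in Iset c, φ t = ⨆ z ∈ Iset c, ∫⁻ t in Ioo 0 z, φ t := by
  refine le_antisymm ?_ (iSup₂_le fun z hz =>
    lintegral_mono_set fun t ht => mem_Iset_of_le hz ht.1 ht.2.le)
  let s : {q : ℚ // (q : ℝ) ∈ Iset c} → Set ℝ := fun q => Ioo 0 (q : ℝ)
  have hs_directed : Directed (· ⊆ ·) s :=
    Monotone.directed_le fun p q hpq => Ioo_subset_Ioo_right (Rat.cast_le.2 hpq)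
  have hs_cover : Iset c ⊆ ⋃ q, s q := fun t ht => by
    obtain ⟨q, htq, hq⟩ := exists_rat_gt_mem_Iset ht
    exact mem_iUnion.2 ⟨⟨q, hq⟩, ht.1, htq⟩
  calc ∫⁻ t in Iset c, φ t ≤ ∫⁻ t in ⋃ q, s q, φ t := lintegral_mono_set hs_cover
    _ = ⨆ q, ∫⁻ t in s q, φ t := setLIntegral_iUnion_of_directed φ hs_directed
    _ ≤ ⨆ z ∈ Iset c, ∫⁻ t in Ioo 0 z, φ t :=
      iSup_le fun q => le_iSup₂_of_le (q : ℝ) q.2 le_rfl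

end Interval

lemma lintegral_eq_lintegral_measure_ofReal_lt {α : Type*} [MeasurableSpace α] (μ : Measure α)
    [SFinite μ] {F : α → ℝ≥0∞} (hF : Measurable F) :
    ∫⁻ x, F x ∂μ = ∫⁻ s in Ioi (0 : ℝ), μ {x | ENNReal.ofReal s < F x} := by
  have hsub : MeasurableSet {p : α × ℝ | ENNReal.ofReal p.2 < F p.1} :=
    measurableSet_lt (by fun_prop) (by fun_prop)
  have hsection (x : α) : volume.restrict (Ioi 0) {s | ENNReal.ofReal s < F x} = F x := by
    rw [Measure.restrict_apply' measurableSet_Ioi, inter_comm]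
    exact volume_Iset (F x)
  calc ∫⁻ x, F x ∂μ = ∫⁻ x, volume.restrict (Ioi 0) {s | ENNReal.ofReal s < F x} ∂μ := by
        simp only [hsection]
    _ = μ.prod (volume.restrict (Ioi 0)) {p : α × ℝ | ENNReal.ofReal p.2 < F p.1} :=
        (Measure.prod_apply hsub).symm
    _ = ∫⁻ s in Ioi (0 : ℝ), μ {x | ENNReal.ofReal s < F x} := Measure.prod_apply_symm hsub

section Rearrangement

variable {μ : Measure ℝ} {F G H : ℝ → ℝ≥0∞}

lemma rearrE_le_iff {t : ℝ} {κ : ℝ≥0∞} :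
    rearrE μ F t ≤ κ ↔ μ {x | κ < F x} ≤ ENNReal.ofReal t := by
  refine ⟨fun h => ?_, fun h => le_of_forall_gt_imp_ge_of_dense fun s hs =>
    sInf_le ⟨bot_le.trans_lt hs, (measure_mono fun x hx => hs.trans hx).trans h⟩⟩
  rcases eq_or_ne κ ∞ with rfl | hκ
  · simp
  obtain ⟨s, hs_anti, hs_mem, hs_lim⟩ := exists_seq_strictAnti_tendsto' (lt_top_iff_ne_top.2 hκ)
  have hcover : {x | κ < F x} ⊆ ⋃ n, {x | s n < F x} := fun x hx =>
    mem_iUnion.2 (hs_lim.eventually_lt_const hx).exists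
  have hmono : Monotone fun n => {x | s n < F x} := fun m n hmn x hx =>
    (hs_anti.antitone hmn).trans_lt hx
  refine (measure_mono hcover).trans (hmono.measure_iUnion.le.trans (iSup_le fun n => ?_))
  obtain ⟨r, ⟨-, hr⟩, hrs⟩ := sInf_lt_iff.1 (h.trans_lt (hs_mem n).1)
  exact (measure_mono fun x hx => hrs.trans hx).trans hr

lemma lt_rearrE_iff {t : ℝ} {κ : ℝ≥0∞} :
    κ < rearrE μ F t ↔ ENNReal.ofReal t < μ {x | κ < F x} :=
  lt_iff_lt_of_le_iff_le rearrE_le_iff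

lemma rearrE_antitone : Antitone (rearrE μ F) := fun _ _ hst =>
  rearrE_le_iff.2 ((rearrE_le_iff.1 le_rfl).trans (ENNReal.ofReal_le_ofReal hst))

lemma measurable_rearrE : Measurable (rearrE μ F) := rearrE_antitone.measurable

lemma rearrE_tsub_const (κ : ℝ≥0∞) (t : ℝ) :
    rearrE μ (fun x => F x - κ) t = rearrE μ F t - κ :=
  eq_of_forall_ge_iff fun s => by
    simp only [rearrE_le_iff, tsub_le_iff_left, lt_tsub_iff_left]

lemma rearrE_min_const (κ : ℝ≥0∞) (t : ℝ) :
    rearrE μ (fun x => min (F x) κ) t = min (rearrE μ F t) κ :=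
  eq_of_forall_ge_iff fun s => by
    rcases lt_or_ge s κ with hs | hs
    · simp [rearrE_le_iff, hs, hs.not_ge]
    · simp [rearrE_le_iff, hs, hs.not_gt]

lemma lintegral_rearrE [SFinite μ] (hF : Measurable F) :
    ∫⁻ t in Ioi (0 : ℝ), rearrE μ F t = ∫⁻ x, F x ∂μ := by
  rw [lintegral_eq_lintegral_measure_ofReal_lt _ measurable_rearrE,
    lintegral_eq_lintegral_measure_ofReal_lt _ hF]
  refine lintegral_congr fun s => ?_
  simp only [lt_rearrE_iff]
  rw [Measure.restrict_apply' measurableSet_Ioi, inter_comm]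
  exact volume_Iset _

lemma lintegral_rearrE_tsub [SFinite μ] (hF : Measurable F) (κ : ℝ≥0∞) :
    ∫⁻ t in Ioi (0 : ℝ), (rearrE μ F t - κ) = ∫⁻ x, (F x - κ) ∂μ := by
  rw [← lintegral_rearrE (hF.sub_const κ)]
  simp only [rearrE_tsub_const]

lemma setLIntegral_Iset_rearrE_tsub [SFinite μ] (hF : Measurable F) (κ : ℝ≥0∞) :
    ∫⁻ t in Iset (μ {x | κ < F x}), (rearrE μ F t - κ) = ∫⁻ x, (F x - κ) ∂μ := by
  rw [← lintegral_rearrE_tsub hF κ]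
  refine setLIntegral_eq_of_subset_of_forall_sdiff_eq_zero (measurableSet_Iset _)
    measurableSet_Ioi (Iset_subset_Ioi _) fun t ht => tsub_eq_zero_of_le (rearrE_le_iff.2 ?_)
  exact not_lt.1 fun hlt => ht.2 ⟨ht.1, hlt⟩

lemma setLIntegral_Ioo_rearrE_le [SFinite μ] (hF : Measurable F) (s : ℝ≥0∞) (x : ℝ) :
    ∫⁻ t in Ioo 0 x, rearrE μ F t ≤ ENNReal.ofReal x * s + ∫⁻ y, (F y - s) ∂μ := by
  rw [← lintegral_rearrE_tsub hF s]
  have hvol : volume (Ioo 0 x) ≤ ENNReal.ofReal x := by rw [Real.volume_Ioo, sub_zero]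
  refine (setLIntegral_le_mul_add_lintegral_tsub hvol _ s).trans ?_
  gcongr
  exact Ioo_subset_Ioi_self

lemma setLIntegral_Ioo_rearrE_eq [SFinite μ] (hF : Measurable F) (x : ℝ) :
    ∫⁻ t in Ioo 0 x, rearrE μ F t
      = ENNReal.ofReal x * rearrE μ F x + ∫⁻ y, (F y - rearrE μ F x) ∂μ := by
  set s := rearrE μ F x
  have hsplit : ∀ t ∈ Ioo 0 x, rearrE μ F t = s + (rearrE μ F t - s) := fun t ht =>
    (add_tsub_cancel_of_le (rearrE_antitone ht.2.le)).symm
  have htail : ∫⁻ t in Ioo 0 x, (rearrE μ F t - s) = ∫⁻ t in Ioi (0 : ℝ), (rearrE μ F t - s) :=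
    setLIntegral_eq_of_subset_of_forall_sdiff_eq_zero measurableSet_Ioo measurableSet_Ioi
      Ioo_subset_Ioi_self fun t ht =>
        tsub_eq_zero_of_le (rearrE_antitone (not_lt.1 fun htx => ht.2 ⟨ht.1, htx⟩))
  rw [setLIntegral_congr_fun measurableSet_Ioo hsplit, lintegral_add_left measurable_const, htail,
    lintegral_rearrE_tsub hF]
  simp [mul_comm]

lemma setLIntegral_Ioo_rearrE_le_lintegral [SFinite μ] (hF : Measurable F) (x : ℝ) :
    ∫⁻ t in Ioo 0 x, rearrE μ F t ≤ ∫⁻ y, F y ∂μ := by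
  simpa using setLIntegral_Ioo_rearrE_le hF 0 x

lemma rearrE_ne_top_of_lintegral_ne_top [SFinite μ] (hF : Measurable F)
    (hF_fin : ∫⁻ x, F x ∂μ ≠ ∞) {t : ℝ} (ht : 0 < t) : rearrE μ F t ≠ ∞ := by
  intro htop
  refine hF_fin (eq_top_iff.2 (le_trans ?_ (setLIntegral_Ioo_rearrE_le_lintegral hF t)))
  simp [setLIntegral_Ioo_rearrE_eq hF t, htop, ENNReal.mul_top, ht]

lemma setLIntegral_Ioo_rearrE_le_add [SFinite μ] (hF : Measurable F) (hG : Measurable G)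
    (hH : Measurable H) (hFGH : ∀ᵐ y ∂μ, F y ≤ G y + H y) (x : ℝ) :
    ∫⁻ t in Ioo 0 x, rearrE μ F t
      ≤ (∫⁻ t in Ioo 0 x, rearrE μ G t) + ∫⁻ t in Ioo 0 x, rearrE μ H t := by
  set r := rearrE μ G x
  set s := rearrE μ H x
  calc ∫⁻ t in Ioo 0 x, rearrE μ F t
      ≤ ENNReal.ofReal x * (r + s) + ∫⁻ y, (F y - (r + s)) ∂μ :=
        setLIntegral_Ioo_rearrE_le hF (r + s) x
    _ ≤ ENNReal.ofReal x * (r + s) + ∫⁻ y, ((G y - r) + (H y - s)) ∂μ := by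
        gcongr 1
        refine lintegral_mono_ae (hFGH.mono fun y hy => ?_)
        exact (tsub_le_tsub_right hy _).trans add_tsub_add_le_tsub_add_tsub
    _ = (ENNReal.ofReal x * r + ∫⁻ y, (G y - r) ∂μ)
          + (ENNReal.ofReal x * s + ∫⁻ y, (H y - s) ∂μ) := by
        rw [lintegral_add_left (hG.sub_const r)]; ring
    _ = (∫⁻ t in Ioo 0 x, rearrE μ G t) + ∫⁻ t in Ioo 0 x, rearrE μ H t := by
        rw [setLIntegral_Ioo_rearrE_eq hG, setLIntegral_Ioo_rearrE_eq hH]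

lemma setLIntegral_le_setLIntegral_Ioo_rearrE [SFinite μ] (hF : Measurable F) {E : Set ℝ} {x : ℝ}
    (hE : μ E ≤ ENNReal.ofReal x) : ∫⁻ t in E, F t ∂μ ≤ ∫⁻ t in Ioo 0 x, rearrE μ F t := by
  rw [setLIntegral_Ioo_rearrE_eq hF]
  refine (setLIntegral_le_mul_add_lintegral_tsub hE F (rearrE μ F x)).trans ?_
  gcongr
  exact Measure.restrict_le_self

end Rearrangement

section Truncation

variable {μ : Measure ℝ} {F W : ℝ → ℝ≥0∞} {A : ℝ≥0∞}

lemma setLIntegral_Ioo_rearrE_min_le_of_le_tail (hA : A ≠ ∞) {κ : ℝ≥0∞} {x : ℝ}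
    (hmaj : ∫⁻ t in Ioo 0 x, rearrE μ F t ≤ A + W x)
    (htail : A ≤ ∫⁻ t in Ioo 0 x, (rearrE μ F t - κ)) :
    ∫⁻ t in Ioo 0 x, rearrE μ (fun y => min (F y) κ) t ≤ W x := by
  refine (ENNReal.add_le_add_iff_left hA).1 (le_trans ?_ hmaj)
  calc A + ∫⁻ t in Ioo 0 x, rearrE μ (fun y => min (F y) κ) t
      ≤ (∫⁻ t in Ioo 0 x, (rearrE μ F t - κ)) + ∫⁻ t in Ioo 0 x, min (rearrE μ F t) κ := by
        simp only [rearrE_min_const]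
        gcongr
    _ = ∫⁻ t in Ioo 0 x, rearrE μ F t := by
        rw [← lintegral_add_left (measurable_rearrE.sub_const κ)]
        simp only [tsub_add_min]

lemma setLIntegral_Ioo_rearrE_min_le_of_lt_lintegral_tsub [SFinite μ] (hF : Measurable F)
    (hW : ∀ x y, 0 < y → y ≤ x → ENNReal.ofReal y * W x ≤ ENNReal.ofReal x * W y) (hA : A ≠ ∞)
    (hmaj : ∀ x, 0 < x → ∫⁻ t in Ioo 0 x, rearrE μ F t ≤ A + W x) {κ : ℝ≥0∞}
    (hκ : A < ∫⁻ y, (F y - κ) ∂μ) {y : ℝ} (hy : 0 < y) :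
    ∫⁻ t in Ioo 0 y, rearrE μ (fun x => min (F x) κ) t ≤ W y := by
  rw [← setLIntegral_Iset_rearrE_tsub hF κ, setLIntegral_Iset_eq_iSup] at hκ
  obtain ⟨z, hκ⟩ := lt_iSup_iff.1 hκ
  obtain ⟨hz, hAz⟩ := lt_iSup_iff.1 hκ
  rcases le_total z y with hzy | hyz
  · exact setLIntegral_Ioo_rearrE_min_le_of_le_tail hA (hmaj y hy)
      (hAz.le.trans (lintegral_mono_set (Ioo_subset_Ioo_right hzy)))
  have hconst : ∀ x ≤ z,
      ∫⁻ t in Ioo 0 x, rearrE μ (fun x => min (F x) κ) t = ENNReal.ofReal x * κ := fun x hxz => by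
    rw [setLIntegral_congr_fun (g := fun _ => κ) measurableSet_Ioo fun t ht => ?_]
    · simp [mul_comm]
    · have ht' := mem_Iset_of_le hz ht.1 (ht.2.le.trans hxz)
      exact (rearrE_min_const κ t).trans (min_eq_right (lt_rearrE_iff.2 ht'.2).le)
  have hz_le : ENNReal.ofReal z * κ ≤ W z :=
    hconst z le_rfl ▸ setLIntegral_Ioo_rearrE_min_le_of_le_tail hA (hmaj z hz.1) hAz.le
  rw [hconst y hyz]
  refine (ENNReal.mul_le_mul_iff_right (ENNReal.ofReal_pos.2 hz.1).ne' ENNReal.ofReal_ne_top).1 ?_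
  calc ENNReal.ofReal z * (ENNReal.ofReal y * κ) = ENNReal.ofReal y * (ENNReal.ofReal z * κ) :=
        mul_left_comm _ _ _
    _ ≤ ENNReal.ofReal y * W z := by gcongr
    _ ≤ ENNReal.ofReal z * W y := hW z y hy hyz

lemma exists_level_lintegral_tsub_le_and_setLIntegral_Ioo_rearrE_min_le [SFinite μ]
    (hF : Measurable F) (hF_fin : ∀ x, F x ≠ ∞)
    (hW : ∀ x y, 0 < y → y ≤ x → ENNReal.ofReal y * W x ≤ ENNReal.ofReal x * W y) (hA : A ≠ ∞)
    (hmaj : ∀ x, 0 < x → ∫⁻ t in Ioo 0 x, rearrE μ F t ≤ A + W x) :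
    ∃ κ : ℝ≥0∞, ∫⁻ y, (F y - κ) ∂μ ≤ A ∧
      ∀ y, 0 < y → ∫⁻ t in Ioo 0 y, rearrE μ (fun x => min (F x) κ) t ≤ W y := by
  set S := {κ : ℝ≥0∞ | ∫⁻ y, (F y - κ) ∂μ ≤ A}
  have hS : S.Nonempty := ⟨∞, by simp [S]⟩
  refine ⟨sInf S, ?_, fun y hy => ?_⟩
  · obtain ⟨κ, hκ_anti, hκ_lim, hκ_mem⟩ := exists_seq_tendsto_sInf hS (OrderBot.bddBelow S)
    refine le_of_tendsto' (lintegral_tendsto_of_tendsto_of_monotone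
      (fun n => (hF.sub_const (κ n)).aemeasurable) ?_ ?_) hκ_mem
    · exact Eventually.of_forall fun x m n hmn => tsub_le_tsub_left (hκ_anti hmn) _
    · exact Eventually.of_forall fun x =>
        ENNReal.Tendsto.sub tendsto_const_nhds hκ_lim (Or.inl (hF_fin x))
  · rcases eq_or_ne (sInf S) 0 with hzero | hne
    · rw [lintegral_congr (rearrE_min_const (sInf S)), hzero]
      simp
    obtain ⟨κ, hκ_mono, hκ_mem, hκ_lim⟩ := exists_seq_strictMono_tendsto' (pos_iff_ne_zero.2 hne)
    have hκ_tail (n : ℕ) : A < ∫⁻ y, (F y - κ n) ∂μ :=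
      not_le.1 fun hle => (hκ_mem n).2.not_ge (sInf_le hle)
    refine le_of_tendsto' (lintegral_tendsto_of_tendsto_of_monotone
      (fun n => measurable_rearrE.aemeasurable) ?_ ?_) fun n =>
        setLIntegral_Ioo_rearrE_min_le_of_lt_lintegral_tsub hF hW hA hmaj (hκ_tail n) hy
    · refine Eventually.of_forall fun x m n hmn => ?_
      simp only [rearrE_min_const]
      exact min_le_min_left _ (hκ_mono.monotone hmn)
    · simp only [rearrE_min_const]
      exact Eventually.of_forall fun x => tendsto_const_nhds.min hκ_lim

end Truncation

section RestrictedVolume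

variable {a : ℝ≥0∞} {F ψ : ℝ → ℝ≥0∞}

instance sFinite_volI : SFinite (volI a) :=
  inferInstanceAs (SFinite (volume.restrict (Iset a)))

lemma volI_le (s : Set ℝ) : volI a s ≤ a :=
  (measure_mono (subset_univ s)).trans_eq (by rw [volI, Measure.restrict_apply_univ, volume_Iset])

lemma volI_restrict {s : Set ℝ} (hs : MeasurableSet s) :
    (volI a).restrict s = volume.restrict (s ∩ Iset a) :=
  Measure.restrict_restrict hs

lemma setLIntegral_volI_congr {φ : ℝ → ℝ≥0∞} {s : Set ℝ} (hs : MeasurableSet s)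
    (hφψ : ∀ t ∈ s ∩ Iset a, φ t = ψ t) : ∫⁻ t in s, φ t ∂(volI a) = ∫⁻ t in s, ψ t ∂(volI a) := by
  rw [volI_restrict hs]
  exact setLIntegral_congr_fun (hs.inter (measurableSet_Iset a)) hφψ

lemma setLIntegral_volI_mono {φ : ℝ → ℝ≥0∞} {s : Set ℝ} (hs : MeasurableSet s)
    (hφψ : ∀ t ∈ s ∩ Iset a, φ t ≤ ψ t) : ∫⁻ t in s, φ t ∂(volI a) ≤ ∫⁻ t in s, ψ t ∂(volI a) := by
  rw [volI_restrict hs]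
  exact setLIntegral_mono' (hs.inter (measurableSet_Iset a)) hφψ

lemma setLIntegral_Ioo_volI {x : ℝ} (hx : x ∈ Iset a) :
    ∫⁻ t in Ioo 0 x, ψ t ∂(volI a) = ∫⁻ t in Ioo 0 x, ψ t := by
  rw [volI_restrict measurableSet_Ioo,
    inter_eq_left.2 fun t ht => mem_Iset_of_le hx ht.1 ht.2.le]

lemma rearrE_volI_eq_zero {t : ℝ} (ht : 0 < t) (hta : t ∉ Iset a) : rearrE (volI a) F t = 0 :=
  nonpos_iff_eq_zero.1 (rearrE_le_iff.2 ((volI_le _).trans (not_lt.1 fun hlt => hta ⟨ht, hlt⟩)))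

lemma setLIntegral_Ioo_rearrE_volI (x : ℝ) :
    ∫⁻ t in Ioo 0 x, rearrE (volI a) F t ∂(volI a) = ∫⁻ t in Ioo 0 x, rearrE (volI a) F t := by
  rw [volI_restrict measurableSet_Ioo]
  exact setLIntegral_eq_of_subset_of_forall_sdiff_eq_zero
    (measurableSet_Ioo.inter (measurableSet_Iset a)) measurableSet_Ioo inter_subset_left
    fun t ht => rearrE_volI_eq_zero ht.1.1 fun hta => ht.2 ⟨ht.1, hta⟩

lemma setLIntegral_Ioo_rearrE_volI_le_of_forall_mem_Iset
    (hψ : ∀ z ∈ Iset a, ∫⁻ t in Ioo 0 z, rearrE (volI a) F t ≤ ∫⁻ t in Ioo 0 z, ψ t) (x : ℝ) :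
    ∫⁻ t in Ioo 0 x, rearrE (volI a) F t ≤ ∫⁻ t in Ioo 0 x, ψ t ∂(volI a) := by
  rw [← setLIntegral_Ioo_rearrE_volI, volI_restrict measurableSet_Ioo, ← Iset_ofReal,
    Iset_inter_Iset, setLIntegral_Iset_eq_iSup, setLIntegral_Iset_eq_iSup]
  exact iSup₂_mono fun z hz => hψ z ⟨hz.1, hz.2.trans_le (min_le_right _ _)⟩

lemma rearrE_volI_le_of_antitoneOn (hψ : AntitoneOn ψ (Iset a)) {t : ℝ} (ht : t ∈ Iset a) :
    rearrE (volI a) ψ t ≤ ψ t := by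
  rw [rearrE_le_iff, volI, Measure.restrict_apply' (measurableSet_Iset a)]
  have hsub : {x | ψ t < ψ x} ∩ Iset a ⊆ Ioo 0 t := fun x ⟨hlt, hx⟩ =>
    ⟨hx.1, not_le.1 fun htx => hlt.not_ge (hψ ht hx htx)⟩
  exact (measure_mono hsub).trans_eq (by rw [Real.volume_Ioo, sub_zero])

lemma ofReal_mul_setLIntegral_Ioo_le_of_antitoneOn (hψ : AntitoneOn ψ (Ioi 0)) {x y : ℝ}
    (hy : 0 < y) (hyx : y ≤ x) :
    ENNReal.ofReal y * ∫⁻ t in Ioo 0 x, ψ t ≤ ENNReal.ofReal x * ∫⁻ t in Ioo 0 y, ψ t := by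
  have hright : ∫⁻ t in Ico y x, ψ t ≤ ENNReal.ofReal (x - y) * ψ y :=
    calc ∫⁻ t in Ico y x, ψ t ≤ ∫⁻ _ in Ico y x, ψ y :=
          setLIntegral_mono measurable_const fun t ht => hψ hy (hy.trans_le ht.1) ht.1
      _ = ENNReal.ofReal (x - y) * ψ y := by simp [mul_comm]
  have hleft : ENNReal.ofReal y * ψ y ≤ ∫⁻ t in Ioo 0 y, ψ t :=
    calc ENNReal.ofReal y * ψ y = ∫⁻ _ in Ioo 0 y, ψ y := by simp [mul_comm]
      _ ≤ ∫⁻ t in Ioo 0 y, ψ t :=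
          setLIntegral_mono' measurableSet_Ioo fun t ht => hψ ht.1 hy ht.2.le
  calc ENNReal.ofReal y * ∫⁻ t in Ioo 0 x, ψ t
      ≤ ENNReal.ofReal y * ((∫⁻ t in Ioo 0 y, ψ t) + ENNReal.ofReal (x - y) * ψ y) := by
        rw [← Ioo_union_Ico_eq_Ioo hy hyx]
        gcongr
        exact (lintegral_union_le ψ _ _).trans (by gcongr)
    _ = ENNReal.ofReal y * (∫⁻ t in Ioo 0 y, ψ t)
          + ENNReal.ofReal (x - y) * (ENNReal.ofReal y * ψ y) := by ring
    _ ≤ ENNReal.ofReal y * (∫⁻ t in Ioo 0 y, ψ t)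
          + ENNReal.ofReal (x - y) * ∫⁻ t in Ioo 0 y, ψ t := by gcongr
    _ = ENNReal.ofReal x * ∫⁻ t in Ioo 0 y, ψ t := by
        rw [← add_mul, ← ENNReal.ofReal_add hy.le (sub_nonneg.2 hyx), add_sub_cancel]

lemma ofReal_mul_setLIntegral_volI_le_of_antitoneOn (hψ : AntitoneOn ψ (Iset a)) {x y : ℝ}
    (hy : 0 < y) (hyx : y ≤ x) :
    ENNReal.ofReal y * ∫⁻ t in Ioo 0 x, ψ t ∂(volI a)
      ≤ ENNReal.ofReal x * ∫⁻ t in Ioo 0 y, ψ t ∂(volI a) := by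
  have hindicator (z : ℝ) :
      ∫⁻ t in Ioo 0 z, ψ t ∂(volI a) = ∫⁻ t in Ioo 0 z, (Iset a).indicator ψ t := by
    rw [lintegral_indicator (measurableSet_Iset a), volI, Measure.restrict_comm measurableSet_Ioo]
  simp only [hindicator]
  refine ofReal_mul_setLIntegral_Ioo_le_of_antitoneOn (fun s hs t _ hst => ?_) hy hyx
  by_cases ht : t ∈ Iset a
  · have hs' := mem_Iset_of_le ht hs hst
    simpa only [indicator_of_mem ht, indicator_of_mem hs'] using hψ hs' ht hst
  · simp only [indicator_of_notMem ht, zero_le]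

end RestrictedVolume

section RealFunctions

lemma setLIntegral_Ioo_rearr_le_add {μ : Measure ℝ} [SFinite μ] {f g h : ℝ → ℝ}
    (hf : Measurable f) (hg : Measurable g) (hh : Measurable h)
    (hfgh : ∀ᵐ y ∂μ, f y = g y + h y) (x : ℝ) :
    ∫⁻ t in Ioo 0 x, rearr μ f t
      ≤ (∫⁻ t in Ioo 0 x, rearr μ g t) + ∫⁻ t in Ioo 0 x, rearr μ h t := by
  refine setLIntegral_Ioo_rearrE_le_add hf.abs.ennreal_ofReal hg.abs.ennreal_ofReal
    hh.abs.ennreal_ofReal (hfgh.mono fun y hy => ?_) x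
  rw [hy, ← ENNReal.ofReal_add (abs_nonneg _) (abs_nonneg _)]
  exact ENNReal.ofReal_le_ofReal (abs_add_le _ _)

lemma ofReal_abs_div_abs_mul_toReal {r : ℝ} {c : ℝ≥0∞} (hc : c ≤ ENNReal.ofReal |r|) :
    ENNReal.ofReal |r / |r| * c.toReal| = c := by
  rcases eq_or_ne r 0 with rfl | hr
  · simpa [eq_comm] using hc
  · rw [abs_mul, abs_div, abs_abs, div_self (abs_ne_zero.2 hr), one_mul, ENNReal.abs_toReal,
      ENNReal.ofReal_toReal (hc.trans_lt ENNReal.ofReal_lt_top).ne]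

lemma exists_measurable_add_eq_of_ofReal_abs_eq_add {α : Type*} [MeasurableSpace α] {f : α → ℝ}
    {G H : α → ℝ≥0∞} (hf : Measurable f) (hG : Measurable G) (hH : Measurable H)
    (hfGH : ∀ x, ENNReal.ofReal |f x| = G x + H x) :
    ∃ g h : α → ℝ, Measurable g ∧ Measurable h ∧ (∀ x, f x = g x + h x) ∧
      (∀ x, ENNReal.ofReal |g x| = G x) ∧ ∀ x, ENNReal.ofReal |h x| = H x := by
  have hG_le (x : α) : G x ≤ ENNReal.ofReal |f x| := hfGH x ▸ le_self_add
  have hH_le (x : α) : H x ≤ ENNReal.ofReal |f x| := hfGH x ▸ le_add_self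
  refine ⟨fun x => f x / |f x| * (G x).toReal, fun x => f x / |f x| * (H x).toReal,
    by fun_prop, by fun_prop, fun x => ?_,
    fun x => ofReal_abs_div_abs_mul_toReal (hG_le x),
    fun x => ofReal_abs_div_abs_mul_toReal (hH_le x)⟩
  rw [← mul_add, ← ENNReal.toReal_add ((hG_le x).trans_lt ENNReal.ofReal_lt_top).ne
    ((hH_le x).trans_lt ENNReal.ofReal_lt_top).ne, ← hfGH, ENNReal.toReal_ofReal (abs_nonneg _),
    div_mul_cancel_of_imp abs_eq_zero.1]

end RealFunctions

section Norms

variable {a : ℝ≥0∞} {w f g h u v : ℝ → ℝ} {C : ℝ}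

lemma MWnorm_le {c : ℝ≥0∞} (hh : ∀ x ∈ Iset a,
      ∫⁻ t in Ioo 0 x, rearr (volI a) h t ≤ c * ∫⁻ t in Ioo 0 x, ENNReal.ofReal (w t)) :
    MWnorm a w h ≤ c :=
  iSup₂_le fun x hx => ENNReal.div_le_of_le_mul (hh x hx)

lemma setLIntegral_rearr_le_MWnorm_mul (hM : MWnorm a w h ≠ ∞) {x : ℝ} (hx : x ∈ Iset a)
    (hW : ∫⁻ t in Ioo 0 x, ENNReal.ofReal (w t) ≠ ∞) :
    ∫⁻ t in Ioo 0 x, rearr (volI a) h t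
      ≤ MWnorm a w h * ∫⁻ t in Ioo 0 x, ENNReal.ofReal (w t) :=
  (ENNReal.div_le_iff_le_mul (.inr hM) (.inl hW)).1 (le_iSup₂_of_le x hx le_rfl)

lemma rearr_const_mul_le_of_antitoneOn (hw_nonneg : ∀ x ∈ Iset a, 0 ≤ w x)
    (hw_anti : AntitoneOn w (Iset a)) (hC : 0 ≤ C) {t : ℝ} (ht : t ∈ Iset a) :
    rearr (volI a) (fun x => C * w x) t ≤ ENNReal.ofReal (C * w t) := by
  have habs : ∀ x ∈ Iset a, |C * w x| = C * w x := fun x hx =>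
    abs_of_nonneg (mul_nonneg hC (hw_nonneg x hx))
  have hanti : AntitoneOn (fun x => ENNReal.ofReal |C * w x|) (Iset a) := fun s hs x hx hsx => by
    simp only [habs s hs, habs x hx]
    exact ENNReal.ofReal_le_ofReal (mul_le_mul_of_nonneg_left (hw_anti hs hx hsx) hC)
  exact (rearrE_volI_le_of_antitoneOn hanti ht).trans_eq (by rw [habs t ht])

lemma Bnorm_rearr_add_const_mul_le (hw_nonneg : ∀ x ∈ Iset a, 0 ≤ w x)
    (hw_anti : AntitoneOn w (Iset a)) (hw_meas : Measurable w) (hu : Measurable u) (hC : 0 ≤ C) :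
    Bnorm a w (fun t => (rearr (volI a) u t).toReal + C * w t)
      ≤ (∫⁻ x in Iset a, ENNReal.ofReal |u x|) + ENNReal.ofReal C := by
  have hu_le : ∫⁻ t in Iset a, ENNReal.ofReal |(rearr (volI a) u t).toReal|
      ≤ ∫⁻ x in Iset a, ENNReal.ofReal |u x| :=
    calc ∫⁻ t in Iset a, ENNReal.ofReal |(rearr (volI a) u t).toReal|
        ≤ ∫⁻ t in Iset a, rearr (volI a) u t :=
          lintegral_mono fun t => by
            rw [ENNReal.abs_toReal]; exact ENNReal.ofReal_toReal_le
      _ ≤ ∫⁻ t in Ioi (0 : ℝ), rearr (volI a) u t := lintegral_mono_set (Iset_subset_Ioi a)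
      _ = ∫⁻ x in Iset a, ENNReal.ofReal |u x| := lintegral_rearrE hu.abs.ennreal_ofReal
  refine sInf_le_of_le ⟨_, fun t => C * w t, C, measurable_rearrE.ennreal_toReal,
    hw_meas.const_mul C, hC, Eventually.of_forall fun _ => rfl, fun t ht =>
      rearr_const_mul_le_of_antitoneOn hw_nonneg hw_anti hC ht, rfl⟩ (add_le_add hu_le le_rfl)

lemma setLIntegral_Ioo_rearr_le_rearr_add_const_mul (hw_nonneg : ∀ x ∈ Iset a, 0 ≤ w x)
    (hw_meas : Measurable w) (hu : Measurable u)
    (hu_fin : ∫⁻ x in Iset a, ENNReal.ofReal |u x| ≠ ∞) (hC : 0 ≤ C)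
    (hh : ∀ z ∈ Iset a, ∫⁻ t in Ioo 0 z, rearr (volI a) h t
      ≤ ENNReal.ofReal C * ∫⁻ t in Ioo 0 z, ENNReal.ofReal (w t)) (x : ℝ) :
    (∫⁻ t in Ioo 0 x, rearr (volI a) u t) + ∫⁻ t in Ioo 0 x, rearr (volI a) h t
      ≤ ∫⁻ t in Ioo 0 x, rearr (volI a) (fun s => (rearr (volI a) u s).toReal + C * w s) t := by
  set g : ℝ → ℝ := fun s => (rearr (volI a) u s).toReal + C * w s
  have hg : Measurable g := measurable_rearrE.ennreal_toReal.add (hw_meas.const_mul C)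
  have hg_eq : ∀ t ∈ Ioo 0 x ∩ Iset a,
      rearr (volI a) u t + ENNReal.ofReal C * ENNReal.ofReal (w t) = ENNReal.ofReal |g t| := by
    intro t ⟨ht, hta⟩
    have hut : rearr (volI a) u t ≠ ∞ :=
      rearrE_ne_top_of_lintegral_ne_top hu.abs.ennreal_ofReal hu_fin ht.1
    have hCw : 0 ≤ C * w t := mul_nonneg hC (hw_nonneg t hta)
    rw [abs_of_nonneg (add_nonneg ENNReal.toReal_nonneg hCw),
      ENNReal.ofReal_add ENNReal.toReal_nonneg hCw, ENNReal.ofReal_toReal hut,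
      ENNReal.ofReal_mul hC]
  have hh_le : ∫⁻ t in Ioo 0 x, rearr (volI a) h t
      ≤ ∫⁻ t in Ioo 0 x, ENNReal.ofReal C * ENNReal.ofReal (w t) ∂(volI a) :=
    setLIntegral_Ioo_rearrE_volI_le_of_forall_mem_Iset
      (fun z hz => (hh z hz).trans_eq (lintegral_const_mul _ hw_meas.ennreal_ofReal).symm) x
  calc (∫⁻ t in Ioo 0 x, rearr (volI a) u t) + ∫⁻ t in Ioo 0 x, rearr (volI a) h t
      ≤ (∫⁻ t in Ioo 0 x, rearr (volI a) u t ∂(volI a))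
          + ∫⁻ t in Ioo 0 x, ENNReal.ofReal C * ENNReal.ofReal (w t) ∂(volI a) :=
        add_le_add (setLIntegral_Ioo_rearrE_volI x).ge hh_le
    _ = ∫⁻ t in Ioo 0 x, ENNReal.ofReal |g t| ∂(volI a) := by
        rw [← lintegral_add_left (show Measurable (rearr (volI a) u) from measurable_rearrE)]
        exact setLIntegral_volI_congr measurableSet_Ioo hg_eq
    _ ≤ ∫⁻ t in Ioo 0 x, rearr (volI a) g t :=
        setLIntegral_le_setLIntegral_Ioo_rearrE hg.abs.ennreal_ofReal
          ((Measure.restrict_apply_le _ _).trans_eq (by rw [Real.volume_Ioo, sub_zero]))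

lemma exists_submajorant_Bnorm_le (hw_nonneg : ∀ x ∈ Iset a, 0 ≤ w x)
    (hw_anti : AntitoneOn w (Iset a)) (hw_meas : Measurable w)
    (hW_fin : ∀ t ∈ Iset a, ∫⁻ s in Ioo 0 t, ENNReal.ofReal (w s) ≠ ∞) (hf : Measurable f)
    (hu : Measurable u) (hh : Measurable h) (hfuh : ∀ᵐ x ∂(volI a), f x = u x + h x) :
    ∃ g : ℝ → ℝ, Measurable g ∧
      (∀ x, 0 < x → ∫⁻ t in Ioo 0 x, rearr (volI a) f t ≤ ∫⁻ t in Ioo 0 x, rearr (volI a) g t) ∧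
      Bnorm a w g ≤ (∫⁻ x in Iset a, ENNReal.ofReal |u x|) + MWnorm a w h := by
  by_cases hfin : (∫⁻ x in Iset a, ENNReal.ofReal |u x|) + MWnorm a w h = ∞
  · exact ⟨f, hf, fun _ _ => le_rfl, hfin ▸ le_top⟩
  obtain ⟨hu_fin, hM⟩ := ENNReal.add_ne_top.1 hfin
  set C := (MWnorm a w h).toReal
  have hC : 0 ≤ C := ENNReal.toReal_nonneg
  have hCM : ENNReal.ofReal C = MWnorm a w h := ENNReal.ofReal_toReal hM
  have hh_le : ∀ z ∈ Iset a, ∫⁻ t in Ioo 0 z, rearr (volI a) h t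
      ≤ ENNReal.ofReal C * ∫⁻ t in Ioo 0 z, ENNReal.ofReal (w t) := fun z hz =>
    hCM ▸ setLIntegral_rearr_le_MWnorm_mul hM hz (hW_fin z hz)
  refine ⟨fun t => (rearr (volI a) u t).toReal + C * w t,
    measurable_rearrE.ennreal_toReal.add (hw_meas.const_mul C), fun x _ => ?_, ?_⟩
  · exact (setLIntegral_Ioo_rearr_le_add hf hu hh hfuh x).trans
      (setLIntegral_Ioo_rearr_le_rearr_add_const_mul hw_nonneg hw_meas hu hu_fin hC hh_le x)
  · exact hCM ▸ Bnorm_rearr_add_const_mul_le hw_nonneg hw_anti hw_meas hu hC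

lemma exists_add_eq_MWnorm_le_of_setLIntegral_rearr_le (hw_anti : AntitoneOn w (Iset a))
    (hf : Measurable f) {A c : ℝ≥0∞} (hA : A ≠ ∞)
    (hmaj : ∀ x, 0 < x → ∫⁻ t in Ioo 0 x, rearr (volI a) f t
      ≤ A + c * ∫⁻ t in Ioo 0 x, ENNReal.ofReal (w t) ∂(volI a)) :
    ∃ u h : ℝ → ℝ, Measurable u ∧ Measurable h ∧ (∀ x, f x = u x + h x) ∧
      ∫⁻ x in Iset a, ENNReal.ofReal |u x| ≤ A ∧ MWnorm a w h ≤ c := by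
  have hF : Measurable fun x => ENNReal.ofReal |f x| := hf.abs.ennreal_ofReal
  have hw_anti' : AntitoneOn (fun t => ENNReal.ofReal (w t)) (Iset a) := fun s hs t ht hst =>
    ENNReal.ofReal_le_ofReal (hw_anti hs ht hst)
  obtain ⟨κ, htail, hκ⟩ := exists_level_lintegral_tsub_le_and_setLIntegral_Ioo_rearrE_min_le hF
    (fun _ => ENNReal.ofReal_ne_top) (fun x y hy hyx => by
      rw [mul_left_comm, mul_left_comm _ c]
      gcongr c * ?_
      exact ofReal_mul_setLIntegral_volI_le_of_antitoneOn hw_anti' hy hyx) hA hmaj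
  obtain ⟨u, h, hu, hh, hfuh, hu_abs, hh_abs⟩ :=
    exists_measurable_add_eq_of_ofReal_abs_eq_add hf (hF.sub_const κ) (hF.min measurable_const)
      fun x => (tsub_add_min (b := κ)).symm
  refine ⟨u, h, hu, hh, hfuh, ?_, MWnorm_le fun x hx => ?_⟩
  · exact (lintegral_congr hu_abs).trans_le htail
  · simpa only [rearr, hh_abs, setLIntegral_Ioo_volI hx] using hκ x hx.1

lemma exists_add_eq_add_MWnorm_le (hw_anti : AntitoneOn w (Iset a)) (hf : Measurable f)
    (hg : Measurable g) (hu : Measurable u) (hv : Measurable v) (hC : 0 ≤ C)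
    (hfg : ∀ x, 0 < x →
      ∫⁻ t in Ioo 0 x, rearr (volI a) f t ≤ ∫⁻ t in Ioo 0 x, rearr (volI a) g t)
    (hguv : ∀ᵐ x ∂(volI a), g x = u x + v x)
    (hvw : ∀ t ∈ Iset a, rearr (volI a) v t ≤ ENNReal.ofReal (C * w t)) :
    ∃ u' h : ℝ → ℝ, Measurable u' ∧ Measurable h ∧ (∀ x, f x = u' x + h x) ∧
      (∫⁻ x in Iset a, ENNReal.ofReal |u' x|) + MWnorm a w h
        ≤ (∫⁻ x in Iset a, ENNReal.ofReal |u x|) + ENNReal.ofReal C := by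
  rcases eq_or_ne (∫⁻ x in Iset a, ENNReal.ofReal |u x|) ∞ with hA | hA
  · exact ⟨f, 0, hf, measurable_zero, fun x => (add_zero _).symm, by simp [hA]⟩
  have hv_le (x : ℝ) : ∫⁻ t in Ioo 0 x, rearr (volI a) v t
      ≤ ENNReal.ofReal C * ∫⁻ t in Ioo 0 x, ENNReal.ofReal (w t) ∂(volI a) := by
    rw [← lintegral_const_mul' _ _ ENNReal.ofReal_ne_top]
    simp only [← ENNReal.ofReal_mul hC]
    exact (setLIntegral_Ioo_rearrE_volI x).ge.trans
      (setLIntegral_volI_mono measurableSet_Ioo fun t ht => hvw t ht.2)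
  obtain ⟨u', h, hu', hh, hfuh, hu'_le, hh_le⟩ :=
    exists_add_eq_MWnorm_le_of_setLIntegral_rearr_le hw_anti hf hA fun x hx =>
      calc ∫⁻ t in Ioo 0 x, rearr (volI a) f t
          ≤ ∫⁻ t in Ioo 0 x, rearr (volI a) g t := hfg x hx
        _ ≤ (∫⁻ t in Ioo 0 x, rearr (volI a) u t) + ∫⁻ t in Ioo 0 x, rearr (volI a) v t :=
          setLIntegral_Ioo_rearr_le_add hg hu hv hguv x
        _ ≤ _ := add_le_add
          (setLIntegral_Ioo_rearrE_le_lintegral hu.abs.ennreal_ofReal x) (hv_le x)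
  exact ⟨u', h, hu', hh, hfuh, add_le_add hu'_le hh_le⟩

end Norms

/-- `Q_{L₁+L∞,w} = L₁ + M_W` with equality of norms:
`inf{B(g) : f ≺ g} = inf{‖u‖₁ + ‖h‖_{M_W} : f = u + h a.e.}`. -/
theorem stmt_16 (a : ℝ≥0∞) (ha : 0 < a) (w : ℝ → ℝ)
    (hw_pos : ∀ x ∈ Iset a, 0 < w x) (hw_anti : AntitoneOn w (Iset a)) (hw_meas : Measurable w)
    (hW_fin : ∀ t ∈ Iset a, ∫⁻ s in Set.Ioo 0 t, ENNReal.ofReal (w s) ≠ ∞)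
    (f : ℝ → ℝ) (hf : Measurable f) :
    sInf {c : ℝ≥0∞ | ∃ g : ℝ → ℝ, Measurable g ∧
        (∀ x : ℝ, 0 < x →
          ∫⁻ t in Set.Ioo 0 x, rearr (volI a) f t ≤ ∫⁻ t in Set.Ioo 0 x, rearr (volI a) g t) ∧
        c = Bnorm a w g}
      = sInf {c : ℝ≥0∞ | ∃ u h : ℝ → ℝ, Measurable u ∧ Measurable h ∧
          (∀ᵐ x ∂(volI a), f x = u x + h x) ∧
          c = (∫⁻ x in Iset a, ENNReal.ofReal |u x|) + MWnorm a w h} := by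
  have hw_nonneg : ∀ x ∈ Iset a, 0 ≤ w x := fun x hx => (hw_pos x hx).le
  refine le_antisymm (le_sInf ?_) (le_sInf ?_)
  · rintro _ ⟨u, h, hu, hh, hfuh, rfl⟩
    obtain ⟨g, hg, hfg, hB⟩ :=
      exists_submajorant_Bnorm_le hw_nonneg hw_anti hw_meas hW_fin hf hu hh hfuh
    exact sInf_le_of_le ⟨g, hg, hfg, rfl⟩ hB
  · rintro _ ⟨g, hg, hfg, rfl⟩
    refine le_sInf ?_
    rintro _ ⟨u, v, C, hu, hv, hC, hguv, hvw, rfl⟩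
    obtain ⟨u', h, hu', hh, hfuh, hle⟩ :=
      exists_add_eq_add_MWnorm_le hw_anti hf hg hu hv hC hfg hguv hvw
    exact sInf_le_of_le ⟨u', h, hu', hh, Eventually.of_forall hfuh, rfl⟩ hle
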